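/- arXiv:1909.12459 — 3 statements merged into one kernel-verified Lean document; each statement's English description precedes it below -/
import Mathlib

section
/- The matrix-completion objective f is coercive: f(U,V) tends to +∞ as ‖U‖_F + ‖V‖_F tends to +∞, i.e., f tends to +∞ along the cocompact filter on ℝ^{m×r} × ℝ^{r×n}. -/
open Finset Matrix

/-- Squared Frobenius norm: `frobSq X = ‖X‖_F²`. -/
noncomputable def frobSq {a b : ℕ} (X : Matrix (Fin a) (Fin b) ℝ) : ℝ :=
  ∑ i, ∑ j, (X i j) ^ 2

/-- The matrix-completion objective
`f(U,V) = (1/2)(‖U‖_F² + ‖V‖_F²) + (μ/2) ∑_{(i,j)∈Ω} ((UV − M)_{ij})² + (ν/2) ‖L(UV) − b‖²`. -/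
noncomputable def objF {m n r p : ℕ} (Ω : Finset (Fin m × Fin n)) (M : Matrix (Fin m) (Fin n) ℝ)
    (L : Matrix (Fin m) (Fin n) ℝ →ₗ[ℝ] EuclideanSpace ℝ (Fin p))
    (b : EuclideanSpace ℝ (Fin p)) (μ ν : ℝ)
    (U : Matrix (Fin m) (Fin r) ℝ) (V : Matrix (Fin r) (Fin n) ℝ) : ℝ :=
  (1 / 2) * (frobSq U + frobSq V)
    + (μ / 2) * ∑ ij ∈ Ω, ((U * V - M) ij.1 ij.2) ^ 2
    + (ν / 2) * ‖L (U * V) - b‖ ^ 2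

/-!
The two data terms of the objective are nonnegative, so it dominates its quadratic regularizer. The
regularizer is a sum of squares of separate coordinates, and a point leaves every compact subset of
a product exactly when one of its coordinates leaves every compact set (the cocompact filter of a
product is the coproduct of the cocompact filters). There the corresponding square tends to `+∞`,
and the other squares are nonnegative.
-/

section Coprod

open Filter

variable {β : Type*} [AddCommMonoid β] [Preorder β] [AddLeftMono β]

theorem tendsto_sum_coprodᵢ_atTop {ι : Type*} [Fintype ι] {X : ι → Type*}
    {l : ∀ i, Filter (X i)} {f : ∀ i, X i → β} (hf₀ : ∀ i x, 0 ≤ f i x)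
    (hf : ∀ i, Tendsto (f i) (l i) atTop) :
    Tendsto (fun x => ∑ i, f i (x i)) (Filter.coprodᵢ l) atTop := by
  refine tendsto_iSup.2 fun i => tendsto_atTop_mono (fun x => ?_) ((hf i).comp tendsto_comap)
  exact single_le_sum (f := fun j => f j (x j)) (fun j _ => hf₀ j (x j)) (mem_univ i)

theorem tendsto_add_coprod_atTop {X Y : Type*} {l : Filter X} {l' : Filter Y} {f : X → β}
    {g : Y → β} (hf₀ : ∀ x, 0 ≤ f x) (hg₀ : ∀ y, 0 ≤ g y) (hf : Tendsto f l atTop)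
    (hg : Tendsto g l' atTop) :
    Tendsto (fun z : X × Y => f z.1 + g z.2) (l.coprod l') atTop :=
  tendsto_sup.2
    ⟨tendsto_atTop_mono (fun z => le_add_of_nonneg_right (hg₀ z.2)) (hf.comp tendsto_comap),
      tendsto_atTop_mono (fun z => le_add_of_nonneg_left (hf₀ z.1)) (hg.comp tendsto_comap)⟩

end Coprod

section Squares

open Filter

theorem tendsto_sq_cocompact_atTop : Tendsto (fun x : ℝ => x ^ 2) (cocompact ℝ) atTop := by
  simpa only [Function.comp_def, Real.norm_eq_abs, sq_abs] using
    (tendsto_pow_atTop two_ne_zero).comp (tendsto_norm_cocompact_atTop (E := ℝ))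

theorem tendsto_sum_sq_cocompact_atTop {ι : Type*} [Fintype ι] :
    Tendsto (fun x : ι → ℝ => ∑ i, x i ^ 2) (cocompact (ι → ℝ)) atTop := by
  rw [← coprodᵢ_cocompact]
  exact tendsto_sum_coprodᵢ_atTop (f := fun _ x => x ^ 2) (fun _ => sq_nonneg)
    fun _ => tendsto_sq_cocompact_atTop

theorem frobSq_nonneg {a b : ℕ} (X : Matrix (Fin a) (Fin b) ℝ) : 0 ≤ frobSq X :=
  sum_nonneg fun _ _ => sum_nonneg fun _ _ => sq_nonneg _

theorem tendsto_frobSq_cocompact_atTop {a b : ℕ} :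
    Tendsto (frobSq : Matrix (Fin a) (Fin b) ℝ → ℝ) (cocompact _) atTop := by
  change Tendsto _ (cocompact (Fin a → Fin b → ℝ)) _
  rw [← coprodᵢ_cocompact]
  exact tendsto_sum_coprodᵢ_atTop (f := fun _ (x : Fin b → ℝ) => ∑ j, x j ^ 2)
    (fun _ _ => sum_nonneg fun _ _ => sq_nonneg _) fun _ => tendsto_sum_sq_cocompact_atTop

end Squares

theorem half_frobSq_add_frobSq_le_objF {m n r p : ℕ} (Ω : Finset (Fin m × Fin n))
    (M : Matrix (Fin m) (Fin n) ℝ) (L : Matrix (Fin m) (Fin n) ℝ →ₗ[ℝ] EuclideanSpace ℝ (Fin p))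
    (b : EuclideanSpace ℝ (Fin p)) {μ ν : ℝ} (hμ : 0 ≤ μ) (hν : 0 ≤ ν)
    (U : Matrix (Fin m) (Fin r) ℝ) (V : Matrix (Fin r) (Fin n) ℝ) :
    (1 / 2) * (frobSq U + frobSq V) ≤ objF Ω M L b μ ν U V := by
  have entries_nonneg : 0 ≤ (μ / 2) * ∑ ij ∈ Ω, ((U * V - M) ij.1 ij.2) ^ 2 := by positivity
  have residual_nonneg : 0 ≤ (ν / 2) * ‖L (U * V) - b‖ ^ 2 := by positivity
  unfold objF
  linarith

/-- The objective is coercive: it tends to `+∞` along the cocompact filter. -/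
theorem objF_coercive {m n r p : ℕ} (Ω : Finset (Fin m × Fin n)) (M : Matrix (Fin m) (Fin n) ℝ)
    (L : Matrix (Fin m) (Fin n) ℝ →ₗ[ℝ] EuclideanSpace ℝ (Fin p))
    (b : EuclideanSpace ℝ (Fin p)) (μ ν : ℝ) (hμ : 0 < μ) (hν : 0 < ν) :
    Filter.Tendsto
      (fun UV : Matrix (Fin m) (Fin r) ℝ × Matrix (Fin r) (Fin n) ℝ =>
        objF Ω M L b μ ν UV.1 UV.2)
      (Filter.cocompact (Matrix (Fin m) (Fin r) ℝ × Matrix (Fin r) (Fin n) ℝ))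
      Filter.atTop := by
  have regularizer_tendsto : Filter.Tendsto
      (fun UV : Matrix (Fin m) (Fin r) ℝ × Matrix (Fin r) (Fin n) ℝ =>
        (1 / 2) * (frobSq UV.1 + frobSq UV.2)) (Filter.cocompact _) Filter.atTop := by
    rw [← Filter.coprod_cocompact]
    exact (tendsto_add_coprod_atTop frobSq_nonneg frobSq_nonneg tendsto_frobSq_cocompact_atTop
      tendsto_frobSq_cocompact_atTop).const_mul_atTop one_half_pos
  exact Filter.tendsto_atTop_mono
    (fun UV => half_frobSq_add_frobSq_le_objF Ω M L b hμ.le hν.le UV.1 UV.2) regularizer_tendsto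
end

section
/- The matrix-completion objective f attains a global minimum: there exist U₀ ∈ ℝ^{m×r} and V₀ ∈ ℝ^{r×n} such that f(U₀,V₀) ≤ f(U,V) for all U ∈ ℝ^{m×r} and V ∈ ℝ^{r×n}. -/
open Finset Matrix

/-!
The penalty `‖U‖_F² + ‖V‖_F²` is a sum of squares of the coordinates of `(U, V)`, so it tends to
infinity at infinity. The data terms form a continuous nonnegative function of the product `U * V`;
adding them preserves coercivity, and a lower semicontinuous coercive function attains its minimum.
-/

section Coercivity

open Filter

variable {X Y α : Type*} [TopologicalSpace X] [TopologicalSpace Y]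

theorem exists_forall_le_of_lowerSemicontinuous [Nonempty X] [LinearOrder α] {f : X → α}
    (hf : LowerSemicontinuous f) (hlim : Tendsto f (cocompact X) atTop) :
    ∃ x, ∀ y, f x ≤ f y := by
  obtain ⟨x₀⟩ := ‹Nonempty X›
  obtain ⟨K, hK, hKf⟩ := mem_cocompact.1 (hlim (eventually_ge_atTop (f x₀)))
  obtain ⟨x, -, hx⟩ := LowerSemicontinuousOn.exists_isMinOn (Set.insert_nonempty x₀ K)
    (hK.insert x₀) (hf.lowerSemicontinuousOn _)
  refine ⟨x, fun y => ?_⟩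
  by_cases hy : y ∈ K
  · exact hx (Set.mem_insert_of_mem x₀ hy)
  · exact (hx (Set.mem_insert x₀ K)).trans (hKf hy)

theorem tendsto_add_cocompact_prod [AddCommMonoid α] [PartialOrder α] [IsOrderedAddMonoid α]
    {f : X → α} {g : Y → α} (hf_nonneg : ∀ x, 0 ≤ f x) (hg_nonneg : ∀ y, 0 ≤ g y)
    (hf : Tendsto f (cocompact X) atTop) (hg : Tendsto g (cocompact Y) atTop) :
    Tendsto (fun q : X × Y => f q.1 + g q.2) (cocompact (X × Y)) atTop := by
  rw [← coprod_cocompact, Filter.coprod, tendsto_sup]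
  exact ⟨tendsto_atTop_mono (fun q => le_add_of_nonneg_right (hg_nonneg q.2))
      (hf.comp tendsto_comap),
    tendsto_atTop_mono (fun q => le_add_of_nonneg_left (hf_nonneg q.1))
      (hg.comp tendsto_comap)⟩

theorem tendsto_sum_cocompact_pi {ι : Type*} [Fintype ι] {Z : ι → Type*}
    [∀ i, TopologicalSpace (Z i)] [AddCommMonoid α] [PartialOrder α] [IsOrderedAddMonoid α]
    {f : ∀ i, Z i → α} (hf_nonneg : ∀ i z, 0 ≤ f i z)
    (hf : ∀ i, Tendsto (f i) (cocompact (Z i)) atTop) :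
    Tendsto (fun z : ∀ i, Z i => ∑ i, f i (z i)) (cocompact (∀ i, Z i)) atTop := by
  rw [← coprodᵢ_cocompact, Filter.coprodᵢ, tendsto_iSup]
  intro i
  have f_le_sum (z : ∀ i, Z i) : f i (z i) ≤ ∑ j, f j (z j) :=
    single_le_sum (fun j _ => hf_nonneg j (z j)) (mem_univ i)
  exact tendsto_atTop_mono f_le_sum ((hf i).comp tendsto_comap)

theorem tendsto_sum_sq_cocompact_pi {ι : Type*} [Fintype ι] :
    Tendsto (fun v : ι → ℝ => ∑ i, v i ^ 2) (cocompact (ι → ℝ)) atTop := by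
  have tendsto_sq : Tendsto (fun x : ℝ => x ^ 2) (cocompact ℝ) atTop := by
    simpa only [Function.comp_def, Real.norm_eq_abs, sq_abs] using
      (tendsto_pow_atTop two_ne_zero).comp (tendsto_norm_cocompact_atTop (E := ℝ))
  exact tendsto_sum_cocompact_pi (f := fun _ (x : ℝ) => x ^ 2) (fun _ => sq_nonneg)
    fun _ => tendsto_sq

theorem tendsto_sum_sq_cocompact_matrix {m n : Type*} [Fintype m] [Fintype n] :
    Tendsto (fun A : Matrix m n ℝ => ∑ i, ∑ j, A i j ^ 2) (cocompact (Matrix m n ℝ)) atTop := by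
  have row_nonneg (v : n → ℝ) : 0 ≤ ∑ j, v j ^ 2 := by positivity
  exact tendsto_sum_cocompact_pi (f := fun _ (v : n → ℝ) => ∑ j, v j ^ 2)
    (fun _ => row_nonneg) fun _ => tendsto_sum_sq_cocompact_pi

end Coercivity

theorem objF_exists_global_min_general {m n r : Type*} [Fintype m] [Fintype n] [Fintype r]
    {g : Matrix m n ℝ → ℝ} (hg : LowerSemicontinuous g) (hg_bdd : BddBelow (Set.range g))
    {c : ℝ} (hc : 0 < c) :
    ∃ (U₀ : Matrix m r ℝ) (V₀ : Matrix r n ℝ), ∀ (U : Matrix m r ℝ) (V : Matrix r n ℝ),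
      c * (∑ i, ∑ k, U₀ i k ^ 2 + ∑ k, ∑ j, V₀ k j ^ 2) + g (U₀ * V₀) ≤
        c * (∑ i, ∑ k, U i k ^ 2 + ∑ k, ∑ j, V k j ^ 2) + g (U * V) := by
  let penalty (q : Matrix m r ℝ × Matrix r n ℝ) : ℝ :=
    c * (∑ i, ∑ k, q.1 i k ^ 2 + ∑ k, ∑ j, q.2 k j ^ 2)
  have penalty_cont : Continuous penalty := by fun_prop
  have penalty_coercive : Filter.Tendsto penalty (Filter.cocompact _) Filter.atTop :=
    (tendsto_add_cocompact_prod (fun _ => by positivity) (fun _ => by positivity)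
      tendsto_sum_sq_cocompact_matrix tendsto_sum_sq_cocompact_matrix).const_mul_atTop hc
  have product_cont : Continuous fun q : Matrix m r ℝ × Matrix r n ℝ => q.1 * q.2 := by fun_prop
  obtain ⟨B, hB⟩ := hg_bdd
  obtain ⟨q₀, hq₀⟩ := exists_forall_le_of_lowerSemicontinuous
    (penalty_cont.lowerSemicontinuous.add (hg.comp product_cont))
    (Filter.tendsto_atTop_add_right_of_le _ B penalty_coercive
      fun q => hB (Set.mem_range_self (q.1 * q.2)))
  exact ⟨q₀.1, q₀.2, fun U V => hq₀ (U, V)⟩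

section DataMisfit

variable {m n p : ℕ} (Ω : Finset (Fin m × Fin n)) (M : Matrix (Fin m) (Fin n) ℝ)
  (L : Matrix (Fin m) (Fin n) ℝ →ₗ[ℝ] EuclideanSpace ℝ (Fin p)) (b : EuclideanSpace ℝ (Fin p))
  (μ ν : ℝ)

/-- The part of the objective `objF` that depends only on the product `X = U * V`: the weighted
squared errors on the observed entries and in the linearized power-flow model. -/
noncomputable def dataMisfit (X : Matrix (Fin m) (Fin n) ℝ) : ℝ :=
  (μ / 2) * ∑ ij ∈ Ω, ((X - M) ij.1 ij.2) ^ 2 + (ν / 2) * ‖L X - b‖ ^ 2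

theorem objF_eq_add_dataMisfit {r : ℕ} (U : Matrix (Fin m) (Fin r) ℝ)
    (V : Matrix (Fin r) (Fin n) ℝ) :
    objF Ω M L b μ ν U V =
      (1 / 2) * (frobSq U + frobSq V) + dataMisfit Ω M L b μ ν (U * V) :=
  add_assoc _ _ _

theorem continuous_dataMisfit : Continuous (dataMisfit Ω M L b μ ν) := by
  have hL : Continuous L := L.continuous_of_finiteDimensional
  unfold dataMisfit
  fun_prop

variable {μ ν}

theorem dataMisfit_nonneg (hμ : 0 ≤ μ) (hν : 0 ≤ ν) (X : Matrix (Fin m) (Fin n) ℝ) :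
    0 ≤ dataMisfit Ω M L b μ ν X := by
  unfold dataMisfit
  positivity

theorem bddBelow_range_dataMisfit (hμ : 0 ≤ μ) (hν : 0 ≤ ν) :
    BddBelow (Set.range (dataMisfit Ω M L b μ ν)) :=
  ⟨0, Set.forall_mem_range.2 (dataMisfit_nonneg Ω M L b hμ hν)⟩

end DataMisfit

/-- The objective attains a global minimum. -/
theorem objF_exists_global_min {m n r p : ℕ} (Ω : Finset (Fin m × Fin n)) (M : Matrix (Fin m) (Fin n) ℝ)
    (L : Matrix (Fin m) (Fin n) ℝ →ₗ[ℝ] EuclideanSpace ℝ (Fin p))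
    (b : EuclideanSpace ℝ (Fin p)) (μ ν : ℝ) (hμ : 0 < μ) (hν : 0 < ν) :
    ∃ (U₀ : Matrix (Fin m) (Fin r) ℝ) (V₀ : Matrix (Fin r) (Fin n) ℝ),
      ∀ (U : Matrix (Fin m) (Fin r) ℝ) (V : Matrix (Fin r) (Fin n) ℝ),
        objF Ω M L b μ ν U₀ V₀ ≤ objF Ω M L b μ ν U V := by
  simpa only [objF_eq_add_dataMisfit, frobSq] using objF_exists_global_min_general
    (continuous_dataMisfit Ω M L b μ ν).lowerSemicontinuous
    (bddBelow_range_dataMisfit Ω M L b hμ.le hν.le) one_half_pos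
end

section
/- Both subproblems of the alternating minimization algorithm are well posed: for every V ∈ ℝ^{r×n} there exists a unique U* ∈ ℝ^{m×r} with f(U*,V) ≤ f(U,V) for all U, and for every U ∈ ℝ^{m×r} there exists a unique V* ∈ ℝ^{r×n} with f(U,V*) ≤ f(U,V) for all V. -/
open Finset Matrix

/-!
In either factor, the data-fit part of the objective is convex, being a sum of squared seminorms of
affine functions, and `(1/2)‖·‖_F²` is `1`-strongly convex for the Frobenius norm; hence each
subproblem is `1`-strongly convex. On a finite-dimensional space a strongly convex function is
continuous, strictly convex and of quadratic growth, so it has exactly one minimizer.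
-/

section StrongConvexity

variable {E : Type*} [NormedAddCommGroup E] [NormedSpace ℝ E] {f : E → ℝ} {m : ℝ}

/- Apply strong convexity at the point of the unit sphere about `x₀` on the ray from `x₀` to `x`. -/
lemma quadratic_growth_of_strongConvexOn {x₀ x : E} {c : ℝ} (hf : StrongConvexOn Set.univ m f)
    (hc : ∀ y ∈ Metric.sphere x₀ 1, c ≤ f y) (hx : 1 ≤ dist x x₀) :
    f x₀ + dist x x₀ * ((dist x x₀ - 1) * m / 2 - (f x₀ - c)) ≤ f x := by
  set s := dist x x₀ with hs
  have hs_pos : 0 < s := by linarith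
  set y := s⁻¹ • x + (1 - s⁻¹) • x₀ with hy
  have hy_mem : y ∈ Metric.sphere x₀ 1 := by
    have : y - x₀ = s⁻¹ • (x - x₀) := by rw [hy]; module
    rw [Metric.mem_sphere, dist_eq_norm, this, norm_smul, ← dist_eq_norm, ← hs,
      Real.norm_of_nonneg (by positivity), inv_mul_cancel₀ hs_pos.ne']
  have hy_le : f y ≤ s⁻¹ * f x + (1 - s⁻¹) * f x₀ - (1 - s⁻¹) * m * s / 2 := by
    have := hf.2 (Set.mem_univ x) (Set.mem_univ x₀) (inv_nonneg.2 hs_pos.le)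
      (sub_nonneg.2 (inv_le_one_of_one_le₀ hx)) (add_sub_cancel _ _)
    rw [← dist_eq_norm, ← hs] at this
    convert this using 1
    simp only [smul_eq_mul]
    field_simp
  have hscaled := mul_le_mul_of_nonneg_left ((hc y hy_mem).trans hy_le) hs_pos.le
  field_simp at hscaled
  linarith

lemma eventually_cocompact_le_of_strongConvexOn [FiniteDimensional ℝ E]
    (hf : StrongConvexOn Set.univ m f) (hm : 0 < m) (x₀ : E) :
    ∀ᶠ x in Filter.cocompact E, f x₀ ≤ f x := by
  have : ProperSpace E := FiniteDimensional.proper_real E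
  have hcont : Continuous f := (hf.strictConvexOn hm).convexOn.locallyLipschitz.continuous
  obtain ⟨c, hc⟩ : BddBelow (f '' Metric.sphere x₀ 1) :=
    (isCompact_sphere x₀ 1).bddBelow_image hcont.continuousOn
  filter_upwards [(tendsto_dist_right_cocompact_atTop x₀).eventually_ge_atTop
    (max 1 (1 + 2 * (f x₀ - c) / m))] with x hx
  have hgrowth := quadratic_growth_of_strongConvexOn hf
    (fun y hy => hc (Set.mem_image_of_mem f hy)) ((le_max_left _ _).trans hx)
  have hfar : f x₀ - c ≤ (dist x x₀ - 1) * m / 2 := by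
    have : 2 * (f x₀ - c) / m ≤ dist x x₀ - 1 := by linarith [(le_max_right _ _).trans hx]
    linarith [(div_le_iff₀ hm).1 this]
  linarith [mul_nonneg (dist_nonneg (x := x) (y := x₀)) (sub_nonneg.2 hfar)]

theorem existsUnique_forall_le_of_strongConvexOn [FiniteDimensional ℝ E]
    (hf : StrongConvexOn Set.univ m f) (hm : 0 < m) : ∃! x, ∀ y, f x ≤ f y := by
  have hstrict : StrictConvexOn ℝ Set.univ f := hf.strictConvexOn hm
  have hcont : Continuous f := hstrict.convexOn.locallyLipschitz.continuous
  obtain ⟨x, hx⟩ := hcont.exists_forall_le' 0 (eventually_cocompact_le_of_strongConvexOn hf hm 0)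
  exact ⟨x, hx, fun y hy => hstrict.eq_of_isMinOn (fun z _ => hy z) (fun z _ => hx z)
    (Set.mem_univ y) (Set.mem_univ x)⟩

lemma strongConvexOn_add_convexOn {s : Set E} {g : E → ℝ} (hf : StrongConvexOn s m f)
    (hg : ConvexOn ℝ s g) : StrongConvexOn s m (f + g) := by
  simpa [StrongConvexOn] using UniformConvexOn.add hf hg.uniformConvexOn_zero

end StrongConvexity

section ConvexLoss

lemma convexOn_finsetSum {E ι : Type*} [AddCommMonoid E] [Module ℝ E] {s : Set E}
    (hs : Convex ℝ s) {t : Finset ι} {f : ι → E → ℝ} (hf : ∀ i ∈ t, ConvexOn ℝ s (f i)) :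
    ConvexOn ℝ s (fun x => ∑ i ∈ t, f i x) := by
  simpa only [Finset.sum_fn] using
    Finset.sum_induction f (ConvexOn ℝ s) (fun _ _ => ConvexOn.add) (convexOn_const 0 hs) hf

lemma convexOn_norm_linearMap_sub_sq {E F : Type*} [AddCommGroup E] [Module ℝ E]
    [SeminormedAddCommGroup F] [NormedSpace ℝ F] (T : E →ₗ[ℝ] F) (c : F) :
    ConvexOn ℝ Set.univ (fun x => ‖T x - c‖ ^ 2) := by
  simpa only [Set.preimage_univ, Function.comp_def, Pi.pow_apply, dist_eq_norm] using
    ((convexOn_univ_dist c).pow (fun _ _ => dist_nonneg) 2).comp_linearMap T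

variable {ι κ F : Type*} [SeminormedAddCommGroup F] [NormedSpace ℝ F]

/-- The weighted misfit `(μ/2) ∑_{(i,j)∈Ω} ((Z − M)_{ij})² + (ν/2) ‖L Z − b‖²` of a matrix `Z`,
with respect to the observed entries of `M` and to the linear model `L Z = b`. It is the part of
`objF` that depends on the factors only through their product `Z = UV`. -/
noncomputable def dataFit (Ω : Finset (ι × κ)) (M : Matrix ι κ ℝ) (L : Matrix ι κ ℝ →ₗ[ℝ] F)
    (b : F) (μ ν : ℝ) (Z : Matrix ι κ ℝ) : ℝ :=
  (μ / 2) * ∑ ij ∈ Ω, ((Z - M) ij.1 ij.2) ^ 2 + (ν / 2) * ‖L Z - b‖ ^ 2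

lemma convexOn_dataFit (Ω : Finset (ι × κ)) (M : Matrix ι κ ℝ) (L : Matrix ι κ ℝ →ₗ[ℝ] F)
    (b : F) {μ ν : ℝ} (hμ : 0 ≤ μ) (hν : 0 ≤ ν) :
    ConvexOn ℝ Set.univ (dataFit Ω M L b μ ν) := by
  have hentry (ij : ι × κ) :
      ConvexOn ℝ Set.univ (fun Z : Matrix ι κ ℝ => ((Z - M) ij.1 ij.2) ^ 2) := by
    simpa using convexOn_norm_linearMap_sub_sq (entryLinearMap ℝ ℝ ij.1 ij.2) (M ij.1 ij.2)
  exact ((convexOn_finsetSum convex_univ fun ij _ => hentry ij).smul (by positivity)).add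
    ((convexOn_norm_linearMap_sub_sq L b).smul (by positivity))

end ConvexLoss

section Objective

open scoped Matrix.Norms.Frobenius

lemma frobSq_eq_norm_sq {a b : ℕ} (X : Matrix (Fin a) (Fin b) ℝ) : frobSq X = ‖X‖ ^ 2 := by
  rw [frobenius_norm_def, ← Real.sqrt_eq_rpow, Real.sq_sqrt (by positivity)]
  simp [frobSq]

lemma frobSq_smul_add_smul {a b : ℕ} (X Y : Matrix (Fin a) (Fin b) ℝ) {s t : ℝ}
    (hst : s + t = 1) :
    frobSq (s • X + t • Y) = s * frobSq X + t * frobSq Y - s * t * frobSq (X - Y) := by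
  obtain rfl := eq_sub_of_add_eq hst
  simp only [frobSq, Finset.mul_sum, ← Finset.sum_add_distrib, ← Finset.sum_sub_distrib,
    Matrix.add_apply, Matrix.sub_apply, Matrix.smul_apply, smul_eq_mul]
  congr! 2
  ring

lemma strongConvexOn_half_frobSq {a b : ℕ} :
    StrongConvexOn Set.univ 1 (fun X : Matrix (Fin a) (Fin b) ℝ => (1 / 2) * frobSq X) := by
  refine ⟨convex_univ, fun X _ Y _ s t _ _ hst => le_of_eq ?_⟩
  simp only [frobSq_smul_add_smul X Y hst, ← frobSq_eq_norm_sq, smul_eq_mul]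
  ring

variable {m n r p : ℕ} (Ω : Finset (Fin m × Fin n)) (M : Matrix (Fin m) (Fin n) ℝ)
    (L : Matrix (Fin m) (Fin n) ℝ →ₗ[ℝ] EuclideanSpace ℝ (Fin p))
    (b : EuclideanSpace ℝ (Fin p)) {μ ν : ℝ}

lemma strongConvexOn_objF_left (hμ : 0 ≤ μ) (hν : 0 ≤ ν) (V : Matrix (Fin r) (Fin n) ℝ) :
    StrongConvexOn Set.univ 1 (fun U : Matrix (Fin m) (Fin r) ℝ => objF Ω M L b μ ν U V) := by
  have hfit : ConvexOn ℝ Set.univ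
      (fun U : Matrix (Fin m) (Fin r) ℝ => dataFit Ω M L b μ ν (U * V)) :=
    (convexOn_dataFit Ω M L b hμ hν).comp_linearMap (mulRightLinearMap (Fin m) ℝ V)
  convert strongConvexOn_add_convexOn strongConvexOn_half_frobSq
    (hfit.add_const ((1 / 2) * frobSq V)) using 2 with U
  simp only [objF, dataFit, Pi.add_apply]
  ring

lemma strongConvexOn_objF_right (hμ : 0 ≤ μ) (hν : 0 ≤ ν) (U : Matrix (Fin m) (Fin r) ℝ) :
    StrongConvexOn Set.univ 1 (fun V : Matrix (Fin r) (Fin n) ℝ => objF Ω M L b μ ν U V) := by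
  have hfit : ConvexOn ℝ Set.univ
      (fun V : Matrix (Fin r) (Fin n) ℝ => dataFit Ω M L b μ ν (U * V)) :=
    (convexOn_dataFit Ω M L b hμ hν).comp_linearMap (mulLeftLinearMap (Fin n) ℝ U)
  convert strongConvexOn_add_convexOn strongConvexOn_half_frobSq
    (hfit.add_const ((1 / 2) * frobSq U)) using 2 with V
  simp only [objF, dataFit, Pi.add_apply]
  ring

end Objective

/-- Both subproblems of alternating minimization have unique minimizers. -/
theorem objF_subproblems_wellPosed {m n r p : ℕ} (Ω : Finset (Fin m × Fin n)) (M : Matrix (Fin m) (Fin n) ℝ)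
    (L : Matrix (Fin m) (Fin n) ℝ →ₗ[ℝ] EuclideanSpace ℝ (Fin p))
    (b : EuclideanSpace ℝ (Fin p)) (μ ν : ℝ) (hμ : 0 < μ) (hν : 0 < ν) :
    (∀ V : Matrix (Fin r) (Fin n) ℝ, ∃! Ustar : Matrix (Fin m) (Fin r) ℝ,
        ∀ U : Matrix (Fin m) (Fin r) ℝ, objF Ω M L b μ ν Ustar V ≤ objF Ω M L b μ ν U V) ∧
      (∀ U : Matrix (Fin m) (Fin r) ℝ, ∃! Vstar : Matrix (Fin r) (Fin n) ℝ,
        ∀ V : Matrix (Fin r) (Fin n) ℝ, objF Ω M L b μ ν U Vstar ≤ objF Ω M L b μ ν U V) :=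
  open scoped Matrix.Norms.Frobenius in
  ⟨fun V => existsUnique_forall_le_of_strongConvexOn
      (strongConvexOn_objF_left Ω M L b hμ.le hν.le V) one_pos,
    fun U => existsUnique_forall_le_of_strongConvexOn
      (strongConvexOn_objF_right Ω M L b hμ.le hν.le U) one_pos⟩
end
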